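/- arXiv:2001.00284 — 3 statements merged into one kernel-verified Lean document; each statement's English description precedes it below -/
import Mathlib

section
/- Let D be an abelian category with arbitrary small coproducts carrying a closed symmetric monoidal structure whose tensor product is additive in each variable, and assume that D has no nontrivial localizing tensor-ideal. If X is a flat object of D and Y is any object such that X ⊗ Y is a zero object, then X is a zero object or Y is a zero object. -/
open CategoryTheory CategoryTheory.Limits CategoryTheory.MonoidalCategory

universe v u

/-- A localizing tensor-ideal of an abelian monoidal category with coproducts:
a class of objects closed under isomorphisms, subobjects, quotient objects,
extensions, arbitrary (small) coproducts, and tensoring with arbitrary objects. -/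
def IsLocalizingTensorIdeal {D : Type u} [Category.{v} D] [Abelian D]
    [MonoidalCategory D] [HasCoproducts.{v} D] (S : Set D) : Prop :=
  (∀ (M N : D), (M ≅ N) → M ∈ S → N ∈ S) ∧
  (∀ (M N : D) (f : N ⟶ M), Mono f → M ∈ S → N ∈ S) ∧
  (∀ (M N : D) (f : M ⟶ N), Epi f → M ∈ S → N ∈ S) ∧
  (∀ (T : ShortComplex D), T.ShortExact → T.X₁ ∈ S → T.X₃ ∈ S → T.X₂ ∈ S) ∧
  (∀ (ι : Type v) (f : ι → D), (∀ i, f i ∈ S) → (∐ f) ∈ S) ∧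
  (∀ (N M : D), M ∈ S → (N ⊗ M) ∈ S)

/-! Flatness of `X` makes the kernel of `X ⊗ -` a localizing tensor-ideal containing `Y`. If it
consists of zero objects then `Y` is zero; if it is everything then it contains the unit, so
`X ≅ X ⊗ 𝟙_ D` is zero. -/

instance isClosedUnderColimitsOfShape_isZero {C : Type*} [Category* C] [HasZeroMorphisms C]
    (J : Type*) [Category* J] :
    ObjectProperty.IsClosedUnderColimitsOfShape (IsZero (C := C)) J where
  colimitsOfShape_le := fun _ ⟨hc⟩ ↦ (IsZero.iff_id_eq_zero _).mpr
    (hc.isColimit.hom_ext fun j ↦ (hc.prop_diag_obj j).eq_of_src _ _)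

theorem isZero_tensor_tensor_of_isZero_tensor {C : Type*} [Category* C] [HasZeroMorphisms C]
    [MonoidalCategory C] [BraidedCategory C] {X M : C} (hXM : IsZero (X ⊗ M))
    (N : C) [(tensorLeft N).PreservesZeroMorphisms] : IsZero (X ⊗ N ⊗ M) :=
  let swap : X ⊗ N ⊗ M ≅ N ⊗ X ⊗ M :=
    (α_ X N M).symm ≪≫ whiskerRightIso (β_ X N) M ≪≫ α_ N X M
  ((tensorLeft N).map_isZero hXM).of_iso swap

section

variable {D : Type u} [Category.{v} D] [Abelian D] [MonoidalCategory D] [BraidedCategory D]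
  [HasCoproducts.{v} D] [∀ N : D, (tensorLeft N).PreservesZeroMorphisms]
  (X : D) [PreservesFiniteLimits (tensorLeft X)] [PreservesFiniteColimits (tensorLeft X)]
  [∀ ι : Type v, PreservesColimitsOfShape (Discrete ι) (tensorLeft X)]

theorem isLocalizingTensorIdeal_kernel_tensorLeft :
    IsLocalizingTensorIdeal {M : D | (tensorLeft X).kernel M} := by
  have : (tensorLeft X).kernel.IsSerreClass :=
    inferInstanceAs (ObjectProperty.inverseImage IsZero (tensorLeft X)).IsSerreClass
  have (ι : Type v) : (tensorLeft X).kernel.IsClosedUnderColimitsOfShape (Discrete ι) :=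
    ObjectProperty.IsClosedUnderColimitsOfShape.inverseImage ..
  exact ⟨fun _ _ e ↦ (tensorLeft X).kernel.prop_of_iso e,
    fun _ _ f _ ↦ (tensorLeft X).kernel.prop_of_mono f,
    fun _ _ f _ ↦ (tensorLeft X).kernel.prop_of_epi f,
    fun _ hT ↦ (tensorLeft X).kernel.prop_X₂_of_shortExact hT,
    fun _ _ hf ↦ (tensorLeft X).kernel.prop_colimit _ fun ⟨i⟩ ↦ hf i,
    fun N _ hM ↦ isZero_tensor_tensor_of_isZero_tensor hM N⟩

theorem isZero_or_isZero_of_isZero_tensor_of_flat_general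
    (hD : ∀ S : Set D, IsLocalizingTensorIdeal S → S = {M : D | IsZero M} ∨ S = Set.univ)
    (Y : D) (hXY : IsZero (X ⊗ Y)) : IsZero X ∨ IsZero Y := by
  rcases hD _ (isLocalizingTensorIdeal_kernel_tensorLeft X) with kernel_eq_zero | kernel_eq_univ
  · exact .inr (kernel_eq_zero.subset hXY)
  · have hX : IsZero (X ⊗ 𝟙_ D) := kernel_eq_univ.superset (Set.mem_univ (𝟙_ D))
    exact .inl (hX.of_iso (ρ_ X).symm)

end

/-- If an abelian closed symmetric monoidal category with coproducts has no nontrivial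
localizing tensor-ideal, then a flat object `X` with `X ⊗ Y = 0` forces `X = 0` or `Y = 0`. -/
theorem isZero_or_isZero_of_isZero_tensor_of_flat
    {D : Type u} [Category.{v} D] [Abelian D] [MonoidalCategory D]
    [SymmetricCategory D] [MonoidalClosed D] [MonoidalPreadditive D]
    [HasCoproducts.{v} D]
    (hD : ∀ S : Set D, IsLocalizingTensorIdeal S →
      S = {M : D | IsZero M} ∨ S = Set.univ)
    (X : D) (hX₁ : PreservesFiniteLimits (tensorLeft X))
    (hX₂ : PreservesFiniteColimits (tensorLeft X))
    (Y : D) (hXY : IsZero (X ⊗ Y)) :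
    IsZero X ∨ IsZero Y :=
  isZero_or_isZero_of_isZero_tensor_of_flat_general X hD Y hXY
end

section
/- Let D be an abelian category with arbitrary small coproducts carrying a closed symmetric monoidal structure whose tensor product is additive in each variable, and assume that every object of D admits an epimorphism from a coproduct of dualizable objects. Let E be an object of D such that the internal-hom functor [−, E] : Dᵒᵖ ⥤ D is exact. Then the class S = { M : [M, E] is a zero object } is a localizing tensor-ideal of D: it is closed under subobjects, quotient objects, extensions, arbitrary coproducts, and satisfies N ⊗ M ∈ S for every M ∈ S and every object N of D. -/
open CategoryTheory CategoryTheory.Limits CategoryTheory.MonoidalCategory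
open Opposite

universe v u

/-
The functor `[-, E] : Dᵒᵖ ⥤ D` is right adjoint to its own opposite, since
`Hom(T, [M, E]) ≅ Hom(M, [T, E])`. It therefore turns colimits into limits, which makes its kernel
closed under quotients, extensions and coproducts; the isomorphism `[M ⊗ N, E] ≅ [N, [M, E]]` makes
the kernel a tensor-ideal. Closure under subobjects holds because `[-, E]` turns monomorphisms into
epimorphisms.
-/

section LeftExactKernel

variable {C A : Type*} [Category* C] [Category* A]

instance isClosedUnderLimitsOfShape_isZero (J : Type*) [Category* J] [HasZeroObject A]
    [HasZeroMorphisms A] : ObjectProperty.IsClosedUnderLimitsOfShape (IsZero (C := A)) J where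
  limitsOfShape_le _ h := h.some.isLimit.isZero_pt (Functor.isZero _ h.some.prop_diag_obj)

instance isClosedUnderExtensions_kernel [Abelian C] [Abelian A] (F : C ⥤ A)
    [PreservesFiniteLimits F] : F.kernel.IsClosedUnderExtensions where
  prop_X₂_of_shortExact {S} hS h₁ h₃ := by
    have : F.Additive := F.additive_of_preserves_binary_products
    have exact_map : (S.map F).Exact :=
      (F.preservesFiniteLimits_iff_forall_exact_map_and_mono.1 inferInstance S hS).1
    exact exact_map.isZero_of_both_isZero h₁ h₃

end LeftExactKernel

theorem isZero_ihom_tensorObj {D : Type*} [Category* D] [HasZeroMorphisms D] [MonoidalCategory D]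
    {M E : D} (N : D) [Closed M] [Closed N] [Closed (M ⊗ N)] (hM : IsZero ((ihom M).obj E)) :
    IsZero ((ihom (M ⊗ N)).obj E) :=
  IsZero.of_iso ((ihom N).map_isZero hM) (MonoidalClosed.ihomCurryIso M N E)

theorem isLocalizingTensorIdeal_ker_internalHom_general
    {D : Type u} [Category.{v} D] [Abelian D] [MonoidalCategory D]
    [BraidedCategory D] [MonoidalClosed D] [HasCoproducts.{v} D] (E : D)
    [((MonoidalClosed.internalHom (C := D)).flip.obj E).PreservesEpimorphisms] :
    IsLocalizingTensorIdeal
      {M : D | IsZero (((MonoidalClosed.internalHom (C := D)).obj (op M)).obj E)} := by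
  let F : Dᵒᵖ ⥤ D := (MonoidalClosed.internalHom (C := D)).flip.obj E
  have : PreservesFiniteLimits F := ⟨fun _ _ _ => inferInstance⟩
  exact ⟨fun _ _ e hM => F.kernel.prop_of_iso e.symm.op hM,
    fun _ _ f _ hM => F.kernel.prop_of_epi f.op hM,
    fun _ _ f _ hM => F.kernel.prop_of_mono f.op hM,
    fun _ hT h₁ h₃ => F.kernel.prop_X₂_of_shortExact hT.op h₃ h₁,
    fun _ f hf => F.kernel.unop.prop_colimit (Discrete.functor f) fun i => hf i.as,
    fun N M hM => F.kernel.prop_of_iso (β_ N M).op (isZero_ihom_tensorObj N hM)⟩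

/-- Suppose every object of `D` admits an epimorphism from a coproduct of dualizable
objects, and `E` is an object such that the internal-hom functor `[-, E] : Dᵒᵖ ⥤ D` is
exact.  Then the class of objects `M` with `[M, E] = 0` is a localizing tensor-ideal. -/
theorem isLocalizingTensorIdeal_ker_internalHom
    {D : Type u} [Category.{v} D] [Abelian D] [MonoidalCategory D]
    [SymmetricCategory D] [MonoidalClosed D] [MonoidalPreadditive D]
    [HasCoproducts.{v} D]
    (hgen : ∀ M : D, ∃ (ι : Type v) (f : ι → D) (p : (∐ f) ⟶ M),
      (∀ i : ι, ∃ Y : D, Nonempty (ExactPairing (f i) Y)) ∧ Epi p)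
    (E : D)
    (hE₁ : PreservesFiniteLimits ((MonoidalClosed.internalHom (C := D)).flip.obj E))
    (hE₂ : PreservesFiniteColimits ((MonoidalClosed.internalHom (C := D)).flip.obj E)) :
    IsLocalizingTensorIdeal
      {M : D | IsZero (((MonoidalClosed.internalHom (C := D)).obj (op M)).obj E)} := by
  exact isLocalizingTensorIdeal_ker_internalHom_general E
end

section
/- Let C be an abelian category with a monoidal structure whose tensor product is additive in each variable. Let A be a flat object of C and η : 𝟙 ⟶ A a morphism from the tensor unit such that A ◁ η : A ⟶ A ⊗ A (the identity of A tensored with η) is a monomorphism. Then A ⊗ K is a zero object, where K is the kernel of η. -/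
open CategoryTheory CategoryTheory.Limits CategoryTheory.MonoidalCategory

universe v u

theorem isZero_obj_kernel_of_mono_map {C D : Type*} [Category* C] [Category* D]
    [HasZeroMorphisms C] [HasZeroMorphisms D] (F : C ⥤ D) [F.PreservesZeroMorphisms]
    [F.PreservesMonomorphisms] {X Y : C} (f : X ⟶ Y) [HasKernel f] [Mono (F.map f)] :
    IsZero (F.obj (kernel f)) := by
  have map_ι_comp : F.map (kernel.ι f) ≫ F.map f = 0 := by
    rw [← F.map_comp, kernel.condition, F.map_zero]
  have map_ι_eq_zero : F.map (kernel.ι f) = 0 := zero_of_comp_mono (F.map f) map_ι_comp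
  exact IsZero.of_mono_eq_zero (F.map (kernel.ι f)) map_ι_eq_zero

theorem tensor_kernel_unit_isZero_general {C : Type*} [Category* C] [Preadditive C]
    [MonoidalCategory C] [MonoidalPreadditive C] (A : C)
    [(tensorLeft A).PreservesMonomorphisms] {X Y : C} (f : X ⟶ Y) [HasKernel f]
    (hf : Mono (A ◁ f)) : IsZero (A ⊗ kernel f) :=
  have : Mono ((tensorLeft A).map f) := hf
  isZero_obj_kernel_of_mono_map (tensorLeft A) f

/-- In an abelian monoidal category with additive tensor, if `A` is flat and
`A ◁ η : A ⟶ A ⊗ A` is a monomorphism, then `A ⊗ ker(η)` is zero. -/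
theorem tensor_kernel_unit_isZero
    {C : Type u} [Category.{v} C] [Abelian C] [MonoidalCategory C]
    [MonoidalPreadditive C]
    (A : C) (hA₁ : PreservesFiniteLimits (tensorLeft A))
    (hA₂ : PreservesFiniteColimits (tensorLeft A))
    (η : 𝟙_ C ⟶ A) (hη : Mono (A ◁ η)) :
    IsZero (A ⊗ kernel η) :=
  tensor_kernel_unit_isZero_general A η hη
end
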